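/- Suppose the linear map 𝒜 : H → E × F, 𝒜u = (Au, Tu), is Fredholm (equivalently, the induced map A_T : ker T → E is Fredholm and F/im T is finite-dimensional). Then the indices satisfy ind 𝒜 = ind A_T − dim(F/im T), as an identity of integers. -/

import Mathlib

/-- A linear map between vector spaces over `K` is Fredholm if its kernel is
finite-dimensional and its image has finite codimension. -/
def IsFredholm (K : Type*) [Field K] {V W : Type*} [AddCommGroup V] [Module K V]
    [AddCommGroup W] [Module K W] (f : V →ₗ[K] W) : Prop :=
  FiniteDimensional K (LinearMap.ker f) ∧ FiniteDimensional K (W ⧸ LinearMap.range f)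

/-- The index of a (Fredholm) linear map: dim ker f − dim (W / im f), as an integer. -/
noncomputable def fredholmIndex (K : Type*) [Field K] {V W : Type*} [AddCommGroup V]
    [Module K V] [AddCommGroup W] [Module K W] (f : V →ₗ[K] W) : ℤ :=
  (Module.finrank K (LinearMap.ker f) : ℤ) -
    (Module.finrank K (W ⧸ LinearMap.range f) : ℤ)

/-!
The kernels of `𝒜 = (A, T)` and `A_T` coincide, and the cokernels fit into the short exact sequence
`0 → E / im A_T → (E × F) / im 𝒜 → F / im T → 0` induced by `0 → E → E × F → F → 0`.
-/

open LinearMap Module Submodule Function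

section Semiring

variable {R M N P : Type*} [Semiring R] [AddCommMonoid M] [Module R M]
  [AddCommMonoid N] [Module R N] [AddCommMonoid P] [Module R P]
  (f : M →ₗ[R] N) (g : M →ₗ[R] P)

theorem map_subtype_ker_domRestrict (p : Submodule R M) :
    (ker (f.domRestrict p)).map p.subtype = p ⊓ ker f := by
  rw [ker_domRestrict, map_comap_subtype]

theorem finrank_ker_prod :
    finrank R (ker (f.prod g)) = finrank R (ker (f.domRestrict (ker g))) := by
  rw [ker_prod, inf_comm, ← map_subtype_ker_domRestrict, finrank_map_subtype_eq]

theorem comap_inl_range_prod :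
    (range (f.prod g)).comap (inl R N P) = range (f.domRestrict (ker g)) := by
  ext y
  simp [and_comm]

theorem map_snd_range_prod : (range (f.prod g)).map (snd R N P) = range g := by
  rw [← range_comp, snd_prod]

end Semiring

section Ring

variable {R M N : Type*} [Ring R] [AddCommGroup M] [Module R M] [AddCommGroup N] [Module R N]

theorem mapQ_comap_injective (f : M →ₗ[R] N) (q : Submodule R N) :
    Injective (mapQ (q.comap f) q f le_rfl) := by
  rw [← ker_eq_bot, ker_mapQ, mkQ_map_self]

theorem mapQ_surjective {f : M →ₗ[R] N} (hf : Surjective f) {p : Submodule R M}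
    {q : Submodule R N} (h : p ≤ q.comap f) : Surjective (mapQ p q f h) := by
  rw [← range_eq_top, range_mapQ, range_eq_top.2 hf, Submodule.map_top, range_mkQ]

end Ring

section DivisionRing

variable {K V₁ V₂ V₃ : Type*} [DivisionRing K] [AddCommGroup V₁] [Module K V₁]
  [AddCommGroup V₂] [Module K V₂] [AddCommGroup V₃] [Module K V₃]
  {f : V₁ →ₗ[K] V₂} {g : V₂ →ₗ[K] V₃}

theorem finrank_eq_add_of_exact [FiniteDimensional K V₂] (hf : Injective f) (hfg : Exact f g)
    (hg : Surjective g) : finrank K V₂ = finrank K V₁ + finrank K V₃ := by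
  rw [← finrank_range_add_finrank_ker g, hfg.linearMap_ker_eq, finrank_range_of_inj hf,
    range_eq_top.2 hg, finrank_top, add_comm]

theorem finrank_quotient_eq_comap_add_map (hfg : Exact f g) (hg : Surjective g)
    (q : Submodule K V₂) [FiniteDimensional K (V₂ ⧸ q)] :
    finrank K (V₂ ⧸ q) = finrank K (V₁ ⧸ q.comap f) + finrank K (V₃ ⧸ q.map g) :=
  finrank_eq_add_of_exact (mapQ_comap_injective f q)
    ((hfg.exact_mapQ_iff le_rfl (le_comap_map g q)).2 inf_le_right)
    (mapQ_surjective hg (le_comap_map g q))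

theorem finrank_quotient_range_prod (f : V₁ →ₗ[K] V₂) (g : V₁ →ₗ[K] V₃)
    [FiniteDimensional K ((V₂ × V₃) ⧸ range (f.prod g))] :
    finrank K ((V₂ × V₃) ⧸ range (f.prod g)) =
      finrank K (V₂ ⧸ range (f.domRestrict (ker g))) + finrank K (V₃ ⧸ range g) := by
  rw [finrank_quotient_eq_comap_add_map .inl_snd snd_surjective, comap_inl_range_prod,
    map_snd_range_prod]

end DivisionRing

/-- If 𝒜 : H → E × F, 𝒜u = (Au, Tu), is Fredholm, then
ind 𝒜 = ind A_T − dim(F / im T). -/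
theorem fredholmIndex_prod {K H E F : Type*} [Field K]
    [AddCommGroup H] [Module K H] [AddCommGroup E] [Module K E]
    [AddCommGroup F] [Module K F] (A : H →ₗ[K] E) (T : H →ₗ[K] F)
    (h : IsFredholm K (A.prod T)) :
    fredholmIndex K (A.prod T) =
      fredholmIndex K (A.domRestrict (LinearMap.ker T)) -
        (Module.finrank K (F ⧸ LinearMap.range T) : ℤ) := by
  have : FiniteDimensional K ((E × F) ⧸ range (A.prod T)) := h.2
  rw [fredholmIndex, fredholmIndex, finrank_ker_prod, finrank_quotient_range_prod, Nat.cast_add,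
    sub_add_eq_sub_sub]
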